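/- Let H²_β be the weighted Hardy space induced by a weight sequence w = (w_k)_{k≥1} with w_k → 1, and let B(z) = ∏_{j=1}^m (z_j − z)/(1 − conj(z_j)z) be a Blaschke product on 𝔻 with m distinct zero points z_1, …, z_m ∈ 𝔻. Then the sequence {B^n(z)/(1 − conj(z_j)z) : 1 ≤ j ≤ m, n = 0, 1, 2, …} is total and finitely linearly independent in H²_β. -/

import Mathlib

noncomputable section

open Complex Filter Topology

/-- The sequence-space (ℓ²) model of a weighted Hardy space `H²_β`.
An element `a : H2` represents the analytic function whose `k`-th Taylor
coefficient is `a k / β k` (so that `‖a‖` is exactly the `H²_β`-norm). -/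
abbrev H2 : Type := lp (fun _ : ℕ => ℂ) 2

/-- The direct sum (ℓ²-sense) of `m` copies of `H2`. -/
abbrev Hm (m : ℕ) : Type := PiLp 2 (fun _ : Fin m => H2)

/-- The open unit disk 𝔻 ⊆ ℂ. -/
def unitDisk : Set ℂ := Metric.ball 0 1

/-- `β_0 = 1` and `β_k = ∏_{j=1}^k w_j`. -/
def betaSeq (w : ℕ → ℝ) (k : ℕ) : ℝ := ∏ j ∈ Finset.Icc 1 k, w j

/-- The analytic function on 𝔻 represented by the vector `a` in the model of `H²_β`:
`f(z) = ∑_k (a k / β k) z^k`. -/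
def repFun (β : ℕ → ℝ) (a : H2) (z : ℂ) : ℂ := ∑' k, (a k / (β k : ℂ)) * z ^ k

/-- `T` is (the ℓ²-model of) the multiplication operator `M_g` on `H²_β`.
Existence of such a `T` says precisely that `M_g` is bounded on `H²_β`. -/
def RepMul (β : ℕ → ℝ) (g : ℂ → ℂ) (T : H2 →L[ℂ] H2) : Prop :=
  ∀ a : H2, ∀ z ∈ unitDisk, repFun β (T a) z = g z * repFun β a z

/-- `T` is (the ℓ²-model of) the composition operator `C_ψ` on `H²_β`.
Existence of such a `T` says precisely that `C_ψ` is bounded on `H²_β`. -/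
def RepComp (β : ℕ → ℝ) (ψ : ℂ → ℂ) (T : H2 →L[ℂ] H2) : Prop :=
  ∀ a : H2, ∀ z ∈ unitDisk, repFun β (T a) z = repFun β a (ψ z)

/-- The Möbius factor `φ_{z₀}(z) = (z₀ - z)/(1 - conj z₀ · z)`. -/
def mobius (z₀ z : ℂ) : ℂ := (z₀ - z) / (1 - (starRingEnd ℂ) z₀ * z)

/-- `φ` belongs to `Aut(𝔻)`, i.e. `φ(z) = e^{iθ}(z₀ - z)/(1 - conj z₀ · z)`. -/
def IsDiskAut (φ : ℂ → ℂ) : Prop :=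
  ∃ (θ : ℝ) (z₀ : ℂ), z₀ ∈ unitDisk ∧
    ∀ z, φ z = Complex.exp (θ * Complex.I) * mobius z₀ z

/-- `B` is a finite Blaschke product of order `m`. -/
def IsBlaschke (m : ℕ) (B : ℂ → ℂ) : Prop :=
  ∃ (θ : ℝ) (zs : Fin m → ℂ), (∀ j, zs j ∈ unitDisk) ∧
    ∀ z, B z = Complex.exp (θ * Complex.I) * ∏ j, mobius (zs j) z

/-- `w` is a positive weight sequence tending to `1` such that the weighted Hardy
space `H²_β` is of polynomial growth: `sup_k (k+1)|w_k - 1| < ∞`. -/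
def PolyGrowth (w : ℕ → ℝ) : Prop :=
  (∀ k, 1 ≤ k → 0 < w k) ∧ Tendsto w atTop (nhds 1) ∧
    ∃ M : ℝ, ∀ k : ℕ, 1 ≤ k → ((k : ℝ) + 1) * |w k - 1| ≤ M

/-- `f` is analytic on an open neighbourhood of the closed unit disk. -/
def AnalyticOnClosedDisk (f : ℂ → ℂ) : Prop :=
  ∃ U : Set ℂ, IsOpen U ∧ Metric.closedBall (0:ℂ) 1 ⊆ U ∧ AnalyticOnNhd ℂ f U

/-!
Write `k_ζ(z) = 1 / (1 - conj ζ * z)` for the Szegő kernel and `A` for multiplication by `B`. Under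
the pairing of `H²_β` with `H²_{β⁻¹}`, the vector `k_ζ` is evaluation at `ζ`.

Totality: by partial fractions, the model-space kernel `(1 - conj (B ζ) * B) * k_ζ` is a linear
combination of `k_{z_1}, …, k_{z_m}`, so `k_ζ - conj (B ζ) • A k_ζ` lies in their span. For `ζ`
close to a zero of `B` the operator `conj (B ζ) • A` is a contraction, so iterating this relation
puts `k_ζ` into the closed span of the vectors `A ^ n k_{z_j}`. A vector orthogonal to that span
is thus a function in `H²_{β⁻¹}` that vanishes near a zero of `B`, hence is zero.

Independence: `A` is injective, and a combination of the `k_{z_j}` in the range of `A` vanishes at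
all `z_i`, so its coefficients are killed by the Gram matrix of the `k_{z_j}` in the unweighted
Hardy space, which is nonsingular.

Boundedness of `A`: as `w_k → 1`, for each `q > 1` the powers of the shift `S` satisfy
`‖S ^ n‖ ≤ C * q ^ n`, so `1 - conj (z_j) • S` is invertible and `A` is a product of operators
`(z_j - S) * (1 - conj (z_j) • S)⁻¹`.
-/

open scoped ComplexConjugate

section Algebra

variable {ι K V : Type*} [DivisionRing K] [AddCommGroup V] [Module K V]

lemma linearIndependent_pow_apply {A : Module.End K V} {v : ι → V} (hv : LinearIndependent K v)
    (hA : Function.Injective A)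
    (hvA : Disjoint (Submodule.span K (Set.range v)) (LinearMap.range A)) :
    LinearIndependent K fun q : ι × ℕ => (A ^ q.2) (v q.1) := by
  set f : ι × ℕ → V := fun q => (A ^ q.2) (v q.1)
  have f_comp_succ : f ∘ Prod.map id Nat.succ = A ∘ f := by
    ext q
    simp only [f, Function.comp_apply, Prod.map_fst, Prod.map_snd, id_eq, pow_succ',
      Module.End.mul_apply]
  have level_succ (N : ℕ) : {q : ι × ℕ | q.2 < N + 1} =
      (fun i => (i, 0)) '' Set.univ ∪ Prod.map id Nat.succ '' {q | q.2 < N} := by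
    ext ⟨i, _ | n⟩ <;> simp
  have indep_level (N : ℕ) : LinearIndepOn K f {q | q.2 < N} := by
    induction N with
    | zero => simp
    | succ N ih =>
      rw [level_succ]
      refine LinearIndepOn.union ?_ ?_ ?_
      · exact LinearIndepOn.image_of_comp _ _ (by simpa [f, Function.comp_def] using hv)
      · refine LinearIndepOn.image_of_comp _ _ ?_
        rw [f_comp_succ]
        exact ih.map_injOn A hA.injOn
      · refine hvA.mono (Submodule.span_mono ?_) (Submodule.span_le.mpr ?_)
        · rintro _ ⟨_, ⟨i, _, rfl⟩, rfl⟩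
          exact ⟨i, by simp [f]⟩
        · rw [← Set.image_comp, f_comp_succ]
          rintro _ ⟨q, _, rfl⟩
          exact LinearMap.mem_range_self A (f q)
  have levels_mono : Monotone fun N : ℕ => {q : ι × ℕ | q.2 < N} :=
    fun _ _ hNM _ hq => lt_of_lt_of_le hq hNM
  rw [← linearIndepOn_univ_iff]
  refine (linearIndepOn_iUnion_of_directed levels_mono.directed_le indep_level).mono ?_
  exact fun q _ => Set.mem_iUnion.mpr ⟨q.2 + 1, q.2.lt_succ_self⟩

lemma linearIndependent_geometric_sequences {ι R : Type*} [CommRing R] [IsDomain R] {x : ι → R}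
    (hinj : Function.Injective x) : LinearIndependent R fun i (k : ℕ) => x i ^ k :=
  (linearIndependent_monoidHom (Multiplicative ℕ) R).comp (fun i => powersHom R (x i))
    ((powersHom R).injective.comp hinj)

end Algebra

lemma isUnit_one_sub_of_summable_pow {R : Type*} [Ring R] [TopologicalSpace R]
    [IsTopologicalRing R] [T2Space R] {x : R} (hx : Summable (x ^ ·)) : IsUnit (1 - x) :=
  ⟨⟨1 - x, ∑' n, x ^ n, hx.one_sub_mul_tsum_pow, hx.tsum_pow_mul_one_sub⟩, rfl⟩

lemma mem_of_sub_apply_mem {𝕜 E : Type*} [NontriviallyNormedField 𝕜] [NormedAddCommGroup E]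
    [NormedSpace 𝕜 E] {N : Submodule 𝕜 E} (hN : IsClosed (N : Set E)) {T : E →L[𝕜] E}
    (hT : ‖T‖ < 1) (hTN : ∀ v ∈ N, T v ∈ N) {v : E} (hv : v - T v ∈ N) : v ∈ N := by
  have sub_pow_mem (n : ℕ) : v - (T ^ n) v ∈ N := by
    induction n with
    | zero => simp
    | succ n ih =>
      have telescope : v - (T ^ (n + 1)) v = (v - T v) + T (v - (T ^ n) v) := by
        rw [pow_succ', ContinuousLinearMap.mul_def, ContinuousLinearMap.comp_apply, map_sub]
        abel
      rw [telescope]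
      exact N.add_mem hv (hTN _ ih)
  have pow_tendsto : Tendsto (fun n : ℕ => (T ^ n) v) atTop (𝓝 0) :=
    ((ContinuousLinearMap.apply 𝕜 E v).continuous.tendsto 0).comp
      (tendsto_pow_atTop_nhds_zero_of_norm_lt_one hT)
  exact hN.mem_of_tendsto (by simpa using tendsto_const_nhds.sub pow_tendsto)
    (Eventually.of_forall sub_pow_mem)

lemma apply_mem_topologicalClosure_span_pow_apply {ι R M : Type*} [Semiring R] [AddCommMonoid M]
    [Module R M] [TopologicalSpace M] [ContinuousAdd M] [ContinuousConstSMul R M] (T : M →L[R] M)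
    (v : ι → M) {x : M} (hx : x ∈ (Submodule.span R
      (Set.range fun q : ι × ℕ => (T ^ q.2) (v q.1))).topologicalClosure) :
    T x ∈ (Submodule.span R
      (Set.range fun q : ι × ℕ => (T ^ q.2) (v q.1))).topologicalClosure := by
  refine map_mem_closure T.continuous hx fun y hy => ?_
  refine Submodule.span_induction ?_ (by simp) (fun _ _ _ _ => ?_) (fun t _ _ => ?_) hy
  · rintro _ ⟨⟨i, n⟩, rfl⟩
    exact Submodule.subset_span ⟨(i, n + 1), by simp [pow_succ']⟩
  · rw [map_add]
    exact Submodule.add_mem _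
  · rw [map_smul]
    exact Submodule.smul_mem _ t

section PowerSeries

lemma norm_lt_one_of_mem_unitDisk {z : ℂ} (hz : z ∈ unitDisk) : ‖z‖ < 1 := by
  simpa [unitDisk] using hz

lemma unitDisk_mem_nhds {z : ℂ} (hz : z ∈ unitDisk) : unitDisk ∈ 𝓝 z :=
  Metric.isOpen_ball.mem_nhds hz

lemma one_le_radius_ofScalars {u : ℕ → ℂ}
    (hu : ∀ r : ℝ, 0 ≤ r → r < 1 → Summable fun k => ‖u k‖ * r ^ k) :
    1 ≤ (FormalMultilinearSeries.ofScalars ℂ u).radius := by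
  refine ENNReal.le_of_forall_nnreal_lt fun r hr =>
    FormalMultilinearSeries.le_radius_of_summable _ ?_
  simpa only [FormalMultilinearSeries.ofScalars_norm] using hu r r.2 (by exact_mod_cast hr)

lemma eq_zero_of_frequently_tsum_eq_zero {u : ℕ → ℂ}
    (hu : ∀ r : ℝ, 0 ≤ r → r < 1 → Summable fun k => ‖u k‖ * r ^ k) {z₀ : ℂ}
    (hz₀ : z₀ ∈ unitDisk) (h : ∃ᶠ z in 𝓝[≠] z₀, ∑' k, u k * z ^ k = 0) : u = 0 := by
  set p := FormalMultilinearSeries.ofScalars ℂ u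
  have sum_eq : p.sum = fun z => ∑' k, u k * z ^ k := by
    funext z
    simpa [FormalMultilinearSeries.ofScalarsSum] using
      FormalMultilinearSeries.ofScalars_sum_eq u z
  have series : HasFPowerSeriesOnBall p.sum p 0 1 :=
    (p.hasFPowerSeriesOnBall (one_pos.trans_le (one_le_radius_ofScalars hu))).mono one_pos
      (one_le_radius_ofScalars hu)
  have analytic : AnalyticOnNhd ℂ p.sum unitDisk := by
    simpa [unitDisk, ← Metric.eball_ofReal] using series.analyticOnNhd
  have sum_zero : Set.EqOn p.sum 0 unitDisk :=
    analytic.eqOn_zero_of_preconnected_of_frequently_eq_zero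
      (convex_ball (0 : ℂ) 1).isPreconnected hz₀ (by rwa [sum_eq])
  have p_zero : p = 0 := (series.hasFPowerSeriesAt.congr <|
    eventually_of_mem (unitDisk_mem_nhds (by simp [unitDisk])) sum_zero).eq_zero
  funext k
  rw [← FormalMultilinearSeries.coeff_ofScalars (p := u) (n := k),
    show FormalMultilinearSeries.ofScalars ℂ u = 0 from p_zero]
  rfl

end PowerSeries

section Weights

/-- A positive weight `β` with `lim β_k^{1/k} = 1`, in the form of the two radii of convergence
being at least one. Then `repFun β` is an analytic function on the disk, and the same holds for
the dual weight `β⁻¹`. -/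
structure IsSubexponential (β : ℕ → ℝ) : Prop where
  pos : ∀ k, 0 < β k
  summable_mul_pow : ∀ r : ℝ, 0 ≤ r → r < 1 → Summable fun k => β k * r ^ k
  summable_inv_mul_pow : ∀ r : ℝ, 0 ≤ r → r < 1 → Summable fun k => (β k)⁻¹ * r ^ k

lemma IsSubexponential.inv {β : ℕ → ℝ} (hβ : IsSubexponential β) : IsSubexponential β⁻¹ where
  pos k := inv_pos.mpr (hβ.pos k)
  summable_mul_pow := hβ.summable_inv_mul_pow
  summable_inv_mul_pow := by simpa using hβ.summable_mul_pow

lemma IsSubexponential.one : IsSubexponential 1 where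
  pos _ := one_pos
  summable_mul_pow r h₀ h₁ := by simpa using summable_geometric_of_lt_one h₀ h₁
  summable_inv_mul_pow r h₀ h₁ := by simpa using summable_geometric_of_lt_one h₀ h₁

lemma betaSeq_succ (w : ℕ → ℝ) (k : ℕ) : betaSeq w (k + 1) = betaSeq w k * w (k + 1) :=
  Finset.prod_Icc_succ_top (Nat.le_add_left 1 k) w

lemma betaSeq_pos {w : ℕ → ℝ} (hpos : ∀ k, 1 ≤ k → 0 < w k) (k : ℕ) : 0 < betaSeq w k :=
  Finset.prod_pos fun j hj => hpos j (Finset.mem_Icc.mp hj).1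

lemma betaSeq_inv (w : ℕ → ℝ) : betaSeq w⁻¹ = (betaSeq w)⁻¹ := by
  ext k
  simp [betaSeq]

lemma eventually_betaSeq_succ_le {w : ℕ → ℝ} (hpos : ∀ k, 1 ≤ k → 0 < w k)
    (hlim : Tendsto w atTop (𝓝 1)) {q : ℝ} (hq : 1 < q) :
    ∀ᶠ k in atTop, betaSeq w (k + 1) ≤ q * betaSeq w k := by
  filter_upwards [((tendsto_add_atTop_iff_nat 1).mpr hlim).eventually_le_const hq] with k hk
  rw [betaSeq_succ, mul_comm]
  exact mul_le_mul_of_nonneg_right hk (betaSeq_pos hpos k).le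

lemma summable_betaSeq_mul_pow {w : ℕ → ℝ} (hpos : ∀ k, 1 ≤ k → 0 < w k)
    (hlim : Tendsto w atTop (𝓝 1)) {r : ℝ} (hr₀ : 0 ≤ r) (hr₁ : r < 1) :
    Summable fun k => betaSeq w k * r ^ k := by
  obtain ⟨s, hrs, hs⟩ := exists_between hr₁
  have ratio_lim : Tendsto (fun k => w (k + 1) * r) atTop (𝓝 r) := by
    simpa using ((tendsto_add_atTop_iff_nat 1).mpr hlim).mul_const r
  refine summable_of_ratio_norm_eventually_le hs ?_
  filter_upwards [ratio_lim.eventually_le_const hrs] with k hk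
  have term_nonneg (n : ℕ) : 0 ≤ betaSeq w n * r ^ n :=
    mul_nonneg (betaSeq_pos hpos n).le (pow_nonneg hr₀ n)
  rw [Real.norm_of_nonneg (term_nonneg _), Real.norm_of_nonneg (term_nonneg _)]
  calc betaSeq w (k + 1) * r ^ (k + 1) = w (k + 1) * r * (betaSeq w k * r ^ k) := by
        rw [betaSeq_succ]; ring
    _ ≤ s * (betaSeq w k * r ^ k) := mul_le_mul_of_nonneg_right hk (term_nonneg k)

lemma isSubexponential_betaSeq {w : ℕ → ℝ} (hpos : ∀ k, 1 ≤ k → 0 < w k)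
    (hlim : Tendsto w atTop (𝓝 1)) : IsSubexponential (betaSeq w) where
  pos := betaSeq_pos hpos
  summable_mul_pow _ := summable_betaSeq_mul_pow hpos hlim
  summable_inv_mul_pow r h₀ h₁ := by
    have hlim_inv : Tendsto w⁻¹ atTop (𝓝 1) := inv_one (G := ℝ) ▸ hlim.inv₀ one_ne_zero
    simpa only [betaSeq_inv, Pi.inv_apply] using
      summable_betaSeq_mul_pow (w := w⁻¹) (fun k hk => inv_pos.mpr (hpos k hk)) hlim_inv h₀ h₁

end Weights

section RepFun

variable {β : ℕ → ℝ}

lemma IsSubexponential.summable_norm_coeff_mul_pow (hβ : IsSubexponential β) (a : H2) {r : ℝ}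
    (hr₀ : 0 ≤ r) (hr₁ : r < 1) : Summable fun k => ‖a k / (β k : ℂ)‖ * r ^ k := by
  refine .of_nonneg_of_le (fun k => by positivity) (fun k => ?_)
    ((hβ.summable_inv_mul_pow r hr₀ hr₁).mul_left ‖a‖)
  rw [norm_div, norm_real, Real.norm_of_nonneg (hβ.pos k).le, div_eq_mul_inv, mul_assoc]
  have := (hβ.pos k).le
  gcongr
  exact lp.norm_apply_le_norm two_ne_zero a k

lemma IsSubexponential.summable_coeff_mul_pow (hβ : IsSubexponential β) (a : H2) {z : ℂ}
    (hz : z ∈ unitDisk) : Summable fun k => a k / (β k : ℂ) * z ^ k := by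
  refine .of_norm ?_
  simpa only [norm_mul, norm_pow] using
    hβ.summable_norm_coeff_mul_pow a (norm_nonneg z) (norm_lt_one_of_mem_unitDisk hz)

/-- `repFun β` as a linear embedding of `H²_β` into the functions on the disk. -/
def repFunₗ (hβ : IsSubexponential β) : H2 →ₗ[ℂ] unitDisk → ℂ where
  toFun a z := repFun β a z
  map_add' a b := by
    ext z
    simp only [repFun, Pi.add_apply, lp.coeFn_add, add_div, add_mul]
    exact (hβ.summable_coeff_mul_pow a z.2).tsum_add (hβ.summable_coeff_mul_pow b z.2)
  map_smul' t a := by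
    ext z
    simp only [repFun, Pi.smul_apply, lp.coeFn_smul, smul_eq_mul, mul_div_assoc, mul_assoc,
      tsum_mul_left, RingHom.id_apply]

@[simp]
lemma repFunₗ_apply (hβ : IsSubexponential β) (a : H2) (z : unitDisk) :
    repFunₗ hβ a z = repFun β a z := rfl

lemma eq_zero_of_frequently_repFun_eq_zero (hβ : IsSubexponential β) {a : H2} {z₀ : ℂ}
    (hz₀ : z₀ ∈ unitDisk) (h : ∃ᶠ z in 𝓝[≠] z₀, repFun β a z = 0) : a = 0 := by
  have coeff_zero : (fun k => a k / (β k : ℂ)) = 0 :=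
    eq_zero_of_frequently_tsum_eq_zero (fun _ => hβ.summable_norm_coeff_mul_pow a) hz₀ h
  ext k
  simpa [(hβ.pos k).ne'] using congrFun coeff_zero k

lemma repFunₗ_injective (hβ : IsSubexponential β) : Function.Injective (repFunₗ hβ) := by
  refine (injective_iff_map_eq_zero _).mpr fun a ha => ?_
  have zero_mem : (0 : ℂ) ∈ unitDisk := by simp [unitDisk]
  refine eq_zero_of_frequently_repFun_eq_zero hβ zero_mem (Eventually.frequently ?_)
  filter_upwards [nhdsWithin_le_nhds (unitDisk_mem_nhds zero_mem)] with z hz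
  exact congrFun ha ⟨z, hz⟩

end RepFun

section Szego

lemma conj_mem_unitDisk {z : ℂ} (hz : z ∈ unitDisk) : conj z ∈ unitDisk := by
  simpa [unitDisk] using hz

lemma one_sub_mul_ne_zero {a z : ℂ} (ha : a ∈ unitDisk) (hz : z ∈ unitDisk) : 1 - a * z ≠ 0 := by
  intro h
  have norm_eq_one : ‖a‖ * ‖z‖ = 1 := by rw [← norm_mul, ← sub_eq_zero.mp h, norm_one]
  exact (mul_lt_one_of_nonneg_of_lt_one_left (norm_nonneg a) (norm_lt_one_of_mem_unitDisk ha)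
    (norm_lt_one_of_mem_unitDisk hz).le).ne norm_eq_one

/-- The Szegő kernel `z ↦ 1 / (1 - conj ζ * z)` at `ζ`, as a function on the disk. -/
def szego (ζ : ℂ) (z : unitDisk) : ℂ := (1 - conj ζ * z)⁻¹

lemma memℓp_szegoVector {β : ℕ → ℝ} (hβ : IsSubexponential β) {ζ : ℂ} (hζ : ζ ∈ unitDisk) :
    Memℓp (fun k => (β k : ℂ) * conj ζ ^ k) 2 := by
  refine Memℓp.of_exponent_ge (memℓp_gen (p := 1) ?_) one_le_two
  simpa [abs_of_pos (hβ.pos _)] using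
    hβ.summable_mul_pow ‖ζ‖ (norm_nonneg ζ) (norm_lt_one_of_mem_unitDisk hζ)

/-- The element of `H²_β` that represents the Szegő kernel at `ζ`. -/
def szegoVector {β : ℕ → ℝ} (hβ : IsSubexponential β) {ζ : ℂ} (hζ : ζ ∈ unitDisk) : H2 :=
  ⟨fun k => (β k : ℂ) * conj ζ ^ k, memℓp_szegoVector hβ hζ⟩

lemma repFunₗ_szegoVector {β : ℕ → ℝ} (hβ : IsSubexponential β) {ζ : ℂ} (hζ : ζ ∈ unitDisk) :
    repFunₗ hβ (szegoVector hβ hζ) = szego ζ := by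
  ext z
  have norm_lt : ‖conj ζ * z‖ < 1 := by
    rw [norm_mul]
    exact mul_lt_one_of_nonneg_of_lt_one_left (norm_nonneg _)
      (norm_lt_one_of_mem_unitDisk (conj_mem_unitDisk hζ)) (norm_lt_one_of_mem_unitDisk z.2).le
  rw [szego, ← tsum_geometric_of_norm_lt_one norm_lt]
  refine tsum_congr fun k => ?_
  have : (β k : ℂ) ≠ 0 := by exact_mod_cast (hβ.pos k).ne'
  simp only [szegoVector, mul_pow]
  rw [mul_div_cancel_left₀ _ this]

lemma inner_szegoVector {β : ℕ → ℝ} (hβ : IsSubexponential β) {ζ : ℂ} (hζ : ζ ∈ unitDisk)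
    (a : H2) : inner ℂ (szegoVector hβ hζ) a = repFun β⁻¹ a ζ := by
  rw [lp.inner_eq_tsum]
  refine tsum_congr fun k => ?_
  simp [szegoVector, mul_comm, mul_assoc, mul_left_comm]

lemma linearIndependent_szegoVector {β : ℕ → ℝ} (hβ : IsSubexponential β) {ι : Type*}
    {ζ : ι → ℂ} (hζ : ∀ i, ζ i ∈ unitDisk) (hinj : Function.Injective ζ) :
    LinearIndependent ℂ fun i => szegoVector hβ (hζ i) := by
  have conj_pow_indep : LinearIndependent ℂ fun i (k : ℕ) => conj (ζ i) ^ k :=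
    linearIndependent_geometric_sequences ((starRingEnd ℂ).injective.comp hinj)
  refine linearIndependent_iff'.mpr fun s g hg => linearIndependent_iff'.mp conj_pow_indep s g ?_
  funext k
  have hβk : (β k : ℂ) ≠ 0 := by exact_mod_cast (hβ.pos k).ne'
  refine (mul_eq_zero_iff_left hβk).mp ?_
  have coord_zero : ∑ i ∈ s, g i * (β k * conj (ζ i) ^ k) = 0 := by
    simpa [szegoVector] using congrArg (lp.evalₗ (𝕜 := ℂ) (fun _ : ℕ => ℂ) 2 k) hg
  simpa [Finset.mul_sum, mul_left_comm] using coord_zero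

lemma eq_zero_of_sum_szego_eq_zero {ι : Type*} [Fintype ι] {x : ι → ℂ}
    (hx : ∀ i, x i ∈ unitDisk) (hinj : Function.Injective x) {α : ι → ℂ}
    (h : ∀ i, ∑ j, α j * szego (x j) ⟨x i, hx i⟩ = 0) : α = 0 := by
  set k : ι → H2 := fun i => szegoVector .one (hx i)
  have sum_zero : ∑ j, α j • k j = 0 := by
    rw [← inner_self_eq_zero (𝕜 := ℂ), sum_inner]
    refine Finset.sum_eq_zero fun i _ => ?_
    have eval : repFun 1 (∑ j, α j • k j) (x i) = 0 := by
      rw [← h i]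
      simp only [← repFunₗ_szegoVector .one (hx _), ← repFunₗ_apply .one _ ⟨x i, hx i⟩,
        map_sum, map_smul, Finset.sum_apply, Pi.smul_apply, smul_eq_mul, k]
    rw [inner_smul_left, inner_szegoVector, inv_one, eval, mul_zero]
  funext i
  exact Fintype.linearIndependent_iff.mp (linearIndependent_szegoVector .one hx hinj) α sum_zero i

end Szego

section ModelSpace

lemma one_sub_conj_mobius_mul_mobius_mul_szego {a ζ : ℂ} (ha : a ∈ unitDisk) (hζ : ζ ∈ unitDisk)
    (z : unitDisk) : (1 - conj (mobius a ζ) * mobius a z) * szego ζ z =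
      (1 - conj a * a) / (1 - a * conj ζ) * szego a z := by
  have hζz : 1 - conj ζ * z ≠ 0 := one_sub_mul_ne_zero (conj_mem_unitDisk hζ) z.2
  have haz : 1 - conj a * z ≠ 0 := one_sub_mul_ne_zero (conj_mem_unitDisk ha) z.2
  have haζ : 1 - a * conj ζ ≠ 0 := one_sub_mul_ne_zero ha (conj_mem_unitDisk hζ)
  simp only [mobius, szego, map_div₀, map_sub, map_mul, map_one, conj_conj]
  grind

lemma mobius_mul_szego {a b : ℂ} (ha : a ∈ unitDisk) (hb : b ∈ unitDisk) (hab : a ≠ b)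
    (z : unitDisk) : mobius a z * szego b z =
      (a * conj a - 1) / (conj a - conj b) * szego a z +
        (1 - a * conj b) / (conj a - conj b) * szego b z := by
  have haz : 1 - conj a * z ≠ 0 := one_sub_mul_ne_zero (conj_mem_unitDisk ha) z.2
  have hbz : 1 - conj b * z ≠ 0 := one_sub_mul_ne_zero (conj_mem_unitDisk hb) z.2
  have hconj : conj a - conj b ≠ 0 := by
    rw [← map_sub]
    exact (map_ne_zero _).mpr (sub_ne_zero.mpr hab)
  simp only [mobius, szego]
  grind

lemma mobius_mul_mem_span_szego_insert {a : ℂ} {t : Finset ℂ} (ha : a ∈ unitDisk)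
    (ht : ∀ b ∈ t, b ∈ unitDisk) (hat : a ∉ t) {f : unitDisk → ℂ}
    (hf : f ∈ Submodule.span ℂ (szego '' t)) :
    (fun z : unitDisk => mobius a z) * f ∈ Submodule.span ℂ (szego '' (insert a t : Finset ℂ)) := by
  refine Submodule.span_induction (p := fun f _ => (fun z : unitDisk => mobius a z) * f ∈
    Submodule.span ℂ (szego '' (insert a t : Finset ℂ))) ?_ (by simp) (fun f g _ _ => ?_)
    (fun c f _ => ?_) hf
  · rintro _ ⟨b, hb, rfl⟩
    have expand : (fun z : unitDisk => mobius a z) * szego b =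
        ((a * conj a - 1) / (conj a - conj b)) • szego a +
          ((1 - a * conj b) / (conj a - conj b)) • szego b :=
      funext <| mobius_mul_szego ha (ht b hb) fun hab => hat (hab ▸ hb)
    rw [expand]
    exact Submodule.add_mem _
      (Submodule.smul_mem _ _ (Submodule.subset_span ⟨a, by simp, rfl⟩))
      (Submodule.smul_mem _ _ (Submodule.subset_span ⟨b, by simp [Finset.mem_coe.mp hb], rfl⟩))
  · rw [mul_add]
    exact Submodule.add_mem _
  · rw [mul_smul_comm]
    exact Submodule.smul_mem _ c

lemma modelKernel_mem_span_szego {t : Finset ℂ} (ht : ∀ a ∈ t, a ∈ unitDisk) {ζ : ℂ}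
    (hζ : ζ ∈ unitDisk) :
    (fun z : unitDisk => (1 - conj (∏ a ∈ t, mobius a ζ) * ∏ a ∈ t, mobius a z) * szego ζ z) ∈
      Submodule.span ℂ (szego '' t) := by
  induction t using Finset.induction_on with
  | empty => simp [Pi.zero_def]
  | insert a t hat ih =>
    have ha : a ∈ unitDisk := ht a (Finset.mem_insert_self a t)
    have ht' : ∀ b ∈ t, b ∈ unitDisk := fun b hb => ht b (Finset.mem_insert_of_mem hb)
    have split : (fun z : unitDisk => (1 - conj (∏ b ∈ insert a t, mobius b ζ) *
          ∏ b ∈ insert a t, mobius b z) * szego ζ z) =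
        ((1 - conj a * a) / (1 - a * conj ζ)) • szego a +
          conj (mobius a ζ) • ((fun z : unitDisk => mobius a z) * fun z : unitDisk =>
            (1 - conj (∏ b ∈ t, mobius b ζ) * ∏ b ∈ t, mobius b z) * szego ζ z) := by
      funext z
      have := one_sub_conj_mobius_mul_mobius_mul_szego ha hζ z
      simp only [Finset.prod_insert hat, map_mul, Pi.add_apply, Pi.smul_apply, Pi.mul_apply,
        smul_eq_mul, ← this]
      ring
    rw [split]
    exact Submodule.add_mem _ (Submodule.smul_mem _ _ (Submodule.subset_span ⟨a, by simp, rfl⟩))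
      (Submodule.smul_mem _ _ (mobius_mul_mem_span_szego_insert ha ht' hat (ih ht')))

end ModelSpace

section Blaschke

variable {ι : Type*} [Fintype ι]

/-- The finite Blaschke product with zeros `zs`. -/
def blaschke (zs : ι → ℂ) (z : ℂ) : ℂ := ∏ j, mobius (zs j) z

lemma blaschke_apply_zero (zs : ι → ℂ) (j : ι) : blaschke zs (zs j) = 0 :=
  Finset.prod_eq_zero (Finset.mem_univ j) (by simp [mobius])

variable {zs : ι → ℂ}

lemma continuousAt_blaschke (hzs : ∀ j, zs j ∈ unitDisk) {z : ℂ} (hz : z ∈ unitDisk) :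
    ContinuousAt (blaschke zs) z := by
  refine tendsto_finsetProd _ fun j _ => ?_
  have := one_sub_mul_ne_zero (conj_mem_unitDisk (hzs j)) hz
  change ContinuousAt (fun z => (zs j - z) / (1 - conj (zs j) * z)) z
  fun_prop (disch := assumption)

lemma blaschke_ne_zero (hzs : ∀ j, zs j ∈ unitDisk) {z : ℂ} (hz : z ∈ unitDisk)
    (hz_ne : z ∉ Set.range zs) : blaschke zs z ≠ 0 :=
  Finset.prod_ne_zero_iff.mpr fun j _ => div_ne_zero
    (sub_ne_zero.mpr fun h => hz_ne ⟨j, h⟩) (one_sub_mul_ne_zero (conj_mem_unitDisk (hzs j)) hz)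

lemma blaschkeKernel_mem_span_szego (hzs : ∀ j, zs j ∈ unitDisk) (hinj : Function.Injective zs)
    {ζ : ℂ} (hζ : ζ ∈ unitDisk) :
    (fun z : unitDisk => (1 - conj (blaschke zs ζ) * blaschke zs z) * szego ζ z) ∈
      Submodule.span ℂ (Set.range (szego ∘ zs)) := by
  simpa [blaschke, Set.range_comp] using
    modelKernel_mem_span_szego (t := Finset.univ.map ⟨zs, hinj⟩) (by simpa using hzs) hζ

end Blaschke

section Multipliers

variable {β : ℕ → ℝ} {f g : ℂ → ℂ} {T U : H2 →L[ℂ] H2}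

lemma repMul_iff (hβ : IsSubexponential β) : RepMul β g T ↔
    ∀ a, repFunₗ hβ (T a) = (fun z : unitDisk => g z) * repFunₗ hβ a :=
  forall_congr' fun a => by simp [funext_iff]

namespace RepMul

lemma const (hβ : IsSubexponential β) (c : ℂ) : RepMul β (fun _ => c) (c • 1) :=
  (repMul_iff hβ).mpr fun a => by
    simp only [smul_apply, one_apply_eq_self, map_smul]
    rfl

lemma sub (hβ : IsSubexponential β) (hT : RepMul β f T) (hU : RepMul β g U) :
    RepMul β (f - g) (T - U) := by
  rw [repMul_iff hβ] at *
  intro a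
  rw [sub_apply, map_sub, hT, hU, ← sub_mul]
  rfl

lemma mul (hT : RepMul β f T) (hU : RepMul β g U) : RepMul β (f * g) (T * U) := fun a z hz => by
  rw [ContinuousLinearMap.mul_def, ContinuousLinearMap.comp_apply, hT _ z hz, hU _ z hz,
    Pi.mul_apply, mul_assoc]

lemma one : RepMul β 1 1 := fun a z _ => by simp

lemma pow (hT : RepMul β f T) (n : ℕ) : RepMul β (f ^ n) (T ^ n) := by
  induction n with
  | zero => simpa using one
  | succ n ih => simpa only [pow_succ] using ih.mul hT

lemma inv_of_isUnit (hT : RepMul β f T) (hT_unit : IsUnit T)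
    (hf : ∀ z ∈ unitDisk, f z ≠ 0) : ∃ U, RepMul β f⁻¹ U := by
  obtain ⟨V, rfl⟩ := hT_unit
  refine ⟨(V⁻¹ : (H2 →L[ℂ] H2)ˣ), fun a z hz => ?_⟩
  rw [Pi.inv_apply, eq_inv_mul_iff_mul_eq₀ (hf z hz), ← hT _ z hz,
    ← ContinuousLinearMap.comp_apply, ← ContinuousLinearMap.mul_def, V.mul_inv,
    one_apply_eq_self]

lemma exists_prod {ι : Type*} {f : ι → ℂ → ℂ} (s : Finset ι)
    (h : ∀ i ∈ s, ∃ T, RepMul β (f i) T) : ∃ T, RepMul β (∏ i ∈ s, f i) T :=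
  Finset.prod_induction f (fun g => ∃ T, RepMul β g T)
    (fun _ _ ⟨_, hT⟩ ⟨_, hU⟩ => ⟨_, hT.mul hU⟩) ⟨1, one⟩ h

lemma unique (hβ : IsSubexponential β) (hT : RepMul β g T) (hU : RepMul β g U) : T = U := by
  ext1 a
  apply repFunₗ_injective hβ
  rw [(repMul_iff hβ).mp hT, (repMul_iff hβ).mp hU]

lemma injective (hβ : IsSubexponential β) (hT : RepMul β g T) {z₀ : ℂ} (hz₀ : z₀ ∈ unitDisk)
    (hg : ∀ᶠ z in 𝓝[≠] z₀, g z ≠ 0) : Function.Injective T := by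
  refine (injective_iff_map_eq_zero T).mpr fun a ha =>
    eq_zero_of_frequently_repFun_eq_zero hβ hz₀ (Eventually.frequently ?_)
  filter_upwards [hg, nhdsWithin_le_nhds (unitDisk_mem_nhds hz₀)] with z hgz hz
  have := hT a z hz
  rw [ha] at this
  simpa [repFun, hgz] using this.symm

end RepMul

end Multipliers

section Shift

lemma orthonormal_lp_single : Orthonormal ℂ fun k : ℕ => (lp.single 2 k (1 : ℂ) : H2) := by
  rw [orthonormal_iff_ite]
  intro i j
  simp [lp.inner_single_left, lp.single_apply, Pi.single_apply]

lemma repFun_lp_single (β : ℕ → ℝ) (k : ℕ) (z : ℂ) :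
    repFun β (lp.single 2 k 1) z = z ^ k / β k := by
  rw [repFun, tsum_eq_single k fun j hj => by simp [hj], lp.single_apply_self, one_div_mul_eq_div]

variable {β : ℕ → ℝ}

lemma hasSum_mul_repFun_of_orthonormal (hβ : IsSubexponential β) {e : ℕ → H2}
    (he : Orthonormal ℂ e) (a : H2) {z : ℂ} (hz : z ∈ unitDisk) :
    HasSum (fun k => a k * repFun β (e k) z)
      (repFun β (he.orthogonalFamily.linearIsometry a) z) := by
  have repFun_eq_inner (b : H2) : repFun β b z = innerSL ℂ (szegoVector hβ.inv hz) b := by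
    rw [innerSL_apply_apply, inner_szegoVector, inv_inv]
  simpa [repFun_eq_inner] using
    (innerSL ℂ (szegoVector hβ.inv hz)).hasSum (he.orthogonalFamily.hasSum_linearIsometry a)

lemma exists_repMul_pow (hβ : IsSubexponential β) {p : ℕ} {C : ℝ}
    (hC : ∀ k, β (k + p) ≤ C * β k) : ∃ T, RepMul β (fun z => z ^ p) T ∧ ‖T‖ ≤ C := by
  have ratio_le (k : ℕ) : ‖(β (k + p) / β k : ℂ) • ContinuousLinearMap.id ℂ ℂ‖ ≤ C := by
    simpa [norm_smul, abs_of_pos (hβ.pos _), div_le_iff₀ (hβ.pos k)] using hC k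
  have C_nonneg : 0 ≤ C := (norm_nonneg _).trans (ratio_le 0)
  obtain ⟨D, hD, hD_norm⟩ : ∃ D : H2 →L[ℂ] H2,
      (∀ a k, D a k = β (k + p) / β k * a k) ∧ ‖D‖ ≤ C :=
    ⟨lp.mapCLM 2 _ C_nonneg ratio_le, fun _ _ => rfl, lp.norm_mapCLM_le ..⟩
  have shifted : Orthonormal ℂ fun k : ℕ => (lp.single 2 (k + p) (1 : ℂ) : H2) :=
    orthonormal_lp_single.comp (· + p) (add_left_injective p)
  refine ⟨shifted.orthogonalFamily.linearIsometry.toContinuousLinearMap ∘L D,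
    fun a z hz => ?_, ?_⟩
  · have expand : HasSum (fun k => z ^ p * (a k / β k * z ^ k)) (z ^ p * repFun β a z) :=
      (hβ.summable_coeff_mul_pow a hz).hasSum.mul_left (z ^ p)
    have term_eq (k : ℕ) :
        D a k * repFun β (lp.single 2 (k + p) 1) z = z ^ p * (a k / β k * z ^ k) := by
      have hβkp : (β (k + p) : ℂ) ≠ 0 := by exact_mod_cast (hβ.pos (k + p)).ne'
      rw [hD, repFun_lp_single, pow_add]
      field
    exact (hasSum_mul_repFun_of_orthonormal hβ shifted (D a) hz).unique
      (by simpa only [term_eq] using expand)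
  · exact (ContinuousLinearMap.opNorm_comp_le _ _).trans <| (mul_le_mul
      (LinearIsometry.norm_toContinuousLinearMap_le _) hD_norm (norm_nonneg _)
      zero_le_one).trans_eq (one_mul C)

lemma exists_forall_add_le_mul {𝕜 : Type*} [Field 𝕜] [LinearOrder 𝕜] [IsStrictOrderedRing 𝕜]
    {γ : ℕ → 𝕜} (hγ : ∀ k, 0 < γ k) (h : ∀ᶠ k in atTop, γ (k + 1) ≤ γ k) :
    ∃ C, ∀ k p, γ (k + p) ≤ C * γ k := by
  obtain ⟨N, hN⟩ := eventually_atTop.mp h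
  clear h
  induction N generalizing γ with
  | zero =>
    have anti : Antitone γ := antitone_nat_of_succ_le fun k => hN k k.zero_le
    exact ⟨1, fun k p => by simpa using anti (Nat.le_add_right k p)⟩
  | succ N ih =>
    obtain ⟨C, hC⟩ := ih (γ := fun k => γ (k + 1)) (fun k => hγ (k + 1))
      fun k hk => hN (k + 1) (Nat.succ_le_succ hk)
    refine ⟨max (max C 1) (C * γ 1 / γ 0), ?_⟩
    rintro (_ | k) p
    · rcases p with _ | p
      · exact le_mul_of_one_le_left (hγ 0).le ((le_max_right _ _).trans (le_max_left _ _))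
      · calc γ (0 + (p + 1)) ≤ C * γ 1 := by simpa [add_assoc] using hC 0 p
          _ = C * γ 1 / γ 0 * γ 0 := (div_mul_cancel₀ _ (hγ 0).ne').symm
          _ ≤ _ := mul_le_mul_of_nonneg_right (le_max_right _ _) (hγ 0).le
    · calc γ (k + 1 + p) ≤ C * γ (k + 1) := by simpa [add_right_comm] using hC k p
        _ ≤ _ := mul_le_mul_of_nonneg_right ((le_max_left _ _).trans (le_max_left _ _))
          (hγ (k + 1)).le

lemma exists_forall_add_le_mul_pow (hβ : ∀ k, 0 < β k) {q : ℝ} (hq : 0 < q)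
    (h : ∀ᶠ k in atTop, β (k + 1) ≤ q * β k) : ∃ C, ∀ k p, β (k + p) ≤ C * q ^ p * β k := by
  have normalized : ∀ᶠ k in atTop, β (k + 1) / q ^ (k + 1) ≤ β k / q ^ k := by
    filter_upwards [h] with k hk
    rw [div_le_div_iff₀ (by positivity) (by positivity), pow_succ', ← mul_assoc, mul_comm _ q]
    gcongr
  obtain ⟨C, hC⟩ := exists_forall_add_le_mul (γ := fun k => β k / q ^ k)
    (fun k => div_pos (hβ k) (by positivity)) normalized
  refine ⟨C, fun k p => ?_⟩
  calc β (k + p) = β (k + p) / q ^ (k + p) * q ^ (k + p) := by field_simp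
    _ ≤ C * (β k / q ^ k) * q ^ (k + p) := by gcongr; exact hC k p
    _ = C * q ^ p * β k := by field_simp; ring

lemma exists_norm_pow_le_of_repMul_id (hβ : IsSubexponential β) {q : ℝ} (hq : 0 < q)
    (h : ∀ᶠ k in atTop, β (k + 1) ≤ q * β k) {S : H2 →L[ℂ] H2} (hS : RepMul β id S) :
    ∃ C, ∀ n, ‖S ^ n‖ ≤ C * q ^ n := by
  obtain ⟨C, hC⟩ := exists_forall_add_le_mul_pow hβ.pos hq h
  refine ⟨C, fun n => ?_⟩
  obtain ⟨T, hT, hT_norm⟩ := exists_repMul_pow hβ (hC · n)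
  rwa [(hS.pow n).unique hβ hT]

lemma isUnit_one_sub_smul_of_repMul_id (hβ : IsSubexponential β)
    (h : ∀ q, 1 < q → ∀ᶠ k in atTop, β (k + 1) ≤ q * β k) {S : H2 →L[ℂ] H2}
    (hS : RepMul β id S) {ζ : ℂ} (hζ : ζ ∈ unitDisk) : IsUnit (1 - ζ • S) := by
  have hζ_norm : ‖ζ‖ < 1 := norm_lt_one_of_mem_unitDisk hζ
  obtain ⟨q, hq, hζq⟩ : ∃ q : ℝ, 1 < q ∧ ‖ζ‖ * q < 1 := by
    refine ⟨2 / (1 + ‖ζ‖), ?_, ?_⟩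
    · rw [one_lt_div (by positivity)]
      linarith
    · rw [← mul_div_assoc, div_lt_one (by positivity)]
      linarith
  obtain ⟨C, hC⟩ := exists_norm_pow_le_of_repMul_id hβ (one_pos.trans hq) (h q hq) hS
  refine isUnit_one_sub_of_summable_pow <|
    .of_norm_bounded ((summable_geometric_of_lt_one (by positivity) hζq).mul_left C) fun n => ?_
  calc ‖(ζ • S) ^ n‖ = ‖ζ‖ ^ n * ‖S ^ n‖ := by rw [smul_pow, norm_smul, norm_pow]
    _ ≤ ‖ζ‖ ^ n * (C * q ^ n) := by gcongr; exact hC n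
    _ = C * (‖ζ‖ * q) ^ n := by ring

lemma exists_repMul_blaschke (hβ : IsSubexponential β)
    (h : ∀ q, 1 < q → ∀ᶠ k in atTop, β (k + 1) ≤ q * β k) {ι : Type*} [Fintype ι] {zs : ι → ℂ}
    (hzs : ∀ j, zs j ∈ unitDisk) : ∃ A, RepMul β (blaschke zs) A := by
  obtain ⟨C, hC⟩ := exists_forall_add_le_mul_pow hβ.pos two_pos (h 2 one_lt_two)
  obtain ⟨S, hS, -⟩ := exists_repMul_pow hβ (hC · 1)
  replace hS : RepMul β id S := by simpa using! hS
  obtain ⟨A, hA⟩ : ∃ A, RepMul β (∏ j, mobius (zs j)) A := by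
    refine RepMul.exists_prod Finset.univ fun j _ => ?_
    have hc : conj (zs j) ∈ unitDisk := conj_mem_unitDisk (hzs j)
    have denom : RepMul β (fun z => 1 - conj (zs j) * z) (1 - conj (zs j) • S) := by
      simpa using! (RepMul.const hβ 1).sub hβ ((RepMul.const hβ (conj (zs j))).mul hS)
    obtain ⟨U, hU⟩ := denom.inv_of_isUnit (isUnit_one_sub_smul_of_repMul_id hβ h hS hc)
      fun z hz => one_sub_mul_ne_zero hc hz
    exact ⟨_, ((RepMul.const hβ (zs j)).sub hβ hS).mul hU⟩
  exact ⟨A, by simpa only [Finset.prod_fn] using! hA⟩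

end Shift

section Totality

variable {β : ℕ → ℝ} {ι : Type*} [Fintype ι] {zs : ι → ℂ} {A : H2 →L[ℂ] H2}

lemma szegoVector_sub_smul_mem_span (hβ : IsSubexponential β) (hzs : ∀ j, zs j ∈ unitDisk)
    (hinj : Function.Injective zs) (hA : RepMul β (blaschke zs) A) {ζ : ℂ} (hζ : ζ ∈ unitDisk) :
    szegoVector hβ hζ - (conj (blaschke zs ζ) • A) (szegoVector hβ hζ) ∈
      Submodule.span ℂ (Set.range fun j => szegoVector hβ (hzs j)) := by
  have rep_eq : repFunₗ hβ (szegoVector hβ hζ - (conj (blaschke zs ζ) • A) (szegoVector hβ hζ)) =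
      fun z : unitDisk => (1 - conj (blaschke zs ζ) * blaschke zs z) * szego ζ z := by
    rw [smul_apply, map_sub, map_smul, (repMul_iff hβ).mp hA, repFunₗ_szegoVector]
    funext z
    simp only [Pi.sub_apply, Pi.smul_apply, Pi.mul_apply, smul_eq_mul]
    ring
  rw [← Submodule.comap_map_eq_of_injective (repFunₗ_injective hβ) (Submodule.span ℂ _),
    Submodule.mem_comap, rep_eq, Submodule.map_span, ← Set.range_comp]
  simpa only [Function.comp_def, repFunₗ_szegoVector] using
    blaschkeKernel_mem_span_szego hzs hinj hζ

lemma eventually_szegoVector_mem_topologicalClosure (hβ : IsSubexponential β)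
    (hzs : ∀ j, zs j ∈ unitDisk) (hinj : Function.Injective zs) (hA : RepMul β (blaschke zs) A)
    (j₀ : ι) : ∀ᶠ ζ in 𝓝 (zs j₀), ∃ hζ : ζ ∈ unitDisk, szegoVector hβ hζ ∈ (Submodule.span ℂ
      (Set.range fun q : ι × ℕ => (A ^ q.2) (szegoVector hβ (hzs q.1)))).topologicalClosure := by
  have norm_lim : Tendsto (fun ζ => ‖conj (blaschke zs ζ) • A‖) (𝓝 (zs j₀)) (𝓝 0) := by
    simpa [norm_smul, blaschke_apply_zero] using
      ((continuousAt_blaschke hzs (hzs j₀)).norm.tendsto.mul_const ‖A‖)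
  filter_upwards [norm_lim.eventually_lt_const one_pos, unitDisk_mem_nhds (hzs j₀)] with ζ hlt hζ
  refine ⟨hζ, mem_of_sub_apply_mem (Submodule.isClosed_topologicalClosure _) hlt ?_ ?_⟩
  · exact fun v hv => Submodule.smul_mem _ _
      (apply_mem_topologicalClosure_span_pow_apply A (fun j => szegoVector hβ (hzs j)) hv)
  · refine Submodule.le_topologicalClosure _ (Submodule.span_mono ?_
      (szegoVector_sub_smul_mem_span hβ hzs hinj hA hζ))
    rintro _ ⟨j, rfl⟩
    exact ⟨(j, 0), by simp⟩

lemma eq_top_of_eventually_szegoVector_mem (hβ : IsSubexponential β) {N : Submodule ℂ H2}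
    (hN : IsClosed (N : Set H2)) {z₀ : ℂ} (hz₀ : z₀ ∈ unitDisk)
    (h : ∀ᶠ ζ in 𝓝 z₀, ∃ hζ : ζ ∈ unitDisk, szegoVector hβ hζ ∈ N) : N = ⊤ := by
  have : CompleteSpace N := hN.completeSpace_coe
  rw [← Submodule.orthogonal_eq_bot_iff, Submodule.eq_bot_iff]
  intro y hy
  refine eq_zero_of_frequently_repFun_eq_zero hβ.inv hz₀ (Eventually.frequently ?_)
  filter_upwards [nhdsWithin_le_nhds h] with ζ ⟨hζ, hζN⟩
  rw [← inner_szegoVector hβ hζ]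
  exact Submodule.inner_right_of_mem_orthogonal hζN hy

lemma injective_of_repMul_blaschke (hβ : IsSubexponential β) (hzs : ∀ j, zs j ∈ unitDisk)
    (hA : RepMul β (blaschke zs) A) : Function.Injective A := by
  have zero_mem : (0 : ℂ) ∈ unitDisk := by simp [unitDisk]
  refine hA.injective hβ zero_mem ?_
  filter_upwards [nhdsWithin_le_nhds (unitDisk_mem_nhds zero_mem),
    nhdsNE_le_cofinite 0 (Set.finite_range zs).compl_mem_cofinite] with z hz hz_ne
  exact blaschke_ne_zero hzs hz hz_ne

lemma disjoint_span_szegoVector_range (hβ : IsSubexponential β) (hzs : ∀ j, zs j ∈ unitDisk)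
    (hinj : Function.Injective zs) (hA : RepMul β (blaschke zs) A) :
    Disjoint (Submodule.span ℂ (Set.range fun j => szegoVector hβ (hzs j)))
      (LinearMap.range (A : H2 →ₗ[ℂ] H2)) := by
  rw [Submodule.disjoint_def]
  rintro _ hx ⟨v, rfl⟩
  obtain ⟨α, hα⟩ := (Submodule.mem_span_range_iff_exists_fun ℂ).mp hx
  have α_zero : α = 0 := by
    refine eq_zero_of_sum_szego_eq_zero hzs hinj fun i => ?_
    calc ∑ j, α j * szego (zs j) ⟨zs i, hzs i⟩
        = repFunₗ hβ (∑ j, α j • szegoVector hβ (hzs j)) ⟨zs i, hzs i⟩ := by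
          simp [map_sum, repFunₗ_szegoVector, -repFunₗ_apply]
      _ = 0 := by
          rw [hα]
          exact (hA v _ (hzs i)).trans (by rw [blaschke_apply_zero, zero_mul])
  simp [← hα, α_zero]

end Totality

theorem statement8_general {β : ℕ → ℝ} (hβ : IsSubexponential β) {ι : Type*} [Fintype ι]
    [Nonempty ι] {zs : ι → ℂ} (hzs : ∀ j, zs j ∈ unitDisk) (hinj : Function.Injective zs)
    {A : H2 →L[ℂ] H2} (hA : RepMul β (blaschke zs) A) :
    ∃ c : ι × ℕ → H2,
      (∀ (j : ι) (n : ℕ), ∀ z ∈ unitDisk,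
        repFun β (c (j, n)) z = blaschke zs z ^ n / (1 - conj (zs j) * z)) ∧
      (Submodule.span ℂ (Set.range c)).topologicalClosure = ⊤ ∧
      LinearIndependent ℂ c := by
  refine ⟨fun q => (A ^ q.2) (szegoVector hβ (hzs q.1)), fun j n z hz => ?_, ?_, ?_⟩
  · rw [hA.pow n _ z hz, ← repFunₗ_apply hβ _ ⟨z, hz⟩, repFunₗ_szegoVector, Pi.pow_apply, szego,
      div_eq_mul_inv]
  · obtain ⟨j₀⟩ := ‹Nonempty ι›
    exact eq_top_of_eventually_szegoVector_mem hβ (Submodule.isClosed_topologicalClosure _)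
      (hzs j₀) (eventually_szegoVector_mem_topologicalClosure hβ hzs hinj hA j₀)
  · have indep := linearIndependent_pow_apply (A := (A : H2 →ₗ[ℂ] H2))
      (linearIndependent_szegoVector hβ hzs hinj) (injective_of_repMul_blaschke hβ hzs hA)
      (disjoint_span_szegoVector_range hβ hzs hinj hA)
    simpa only [← ContinuousLinearMap.toLinearMap_pow, ContinuousLinearMap.coe_coe] using indep

/-- Let `H²_β` come from a weight sequence `w_k → 1` and let
`B(z) = ∏_{j=1}^m (z_j - z)/(1 - conj z_j · z)` be a Blaschke product with `m`
distinct zeros.  Then the family `{B^n(z)/(1 - conj z_j · z)}` is total and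
finitely linearly independent in `H²_β`. -/
theorem statement8 (w : ℕ → ℝ) (hpos : ∀ k, 1 ≤ k → 0 < w k)
    (hlim : Tendsto w atTop (nhds 1)) (m : ℕ) (hm : 0 < m)
    (zs : Fin m → ℂ) (hzs : ∀ j, zs j ∈ unitDisk) (hinj : Function.Injective zs)
    (B : ℂ → ℂ) (hB : ∀ z, B z = ∏ j, mobius (zs j) z) :
    ∃ c : Fin m × ℕ → H2,
      (∀ (j : Fin m) (n : ℕ), ∀ z ∈ unitDisk,
        repFun (betaSeq w) (c (j, n)) z = B z ^ n / (1 - (starRingEnd ℂ) (zs j) * z)) ∧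
      (Submodule.span ℂ (Set.range c)).topologicalClosure = ⊤ ∧
      LinearIndependent ℂ c := by
  have : Nonempty (Fin m) := Fin.pos_iff_nonempty.mp hm
  obtain rfl : B = blaschke zs := funext hB
  obtain ⟨A, hA⟩ := exists_repMul_blaschke (isSubexponential_betaSeq hpos hlim)
    (fun _ => eventually_betaSeq_succ_le hpos hlim) hzs
  exact statement8_general (isSubexponential_betaSeq hpos hlim) hzs hinj hA
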